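/- Let k be a field, A a Hopf algebra over k with antipode S, and let R ∈ A ⊗ A be an invertible element satisfying the quasitriangularity axioms: (Δ ⊗ id)(R) = R¹³ R²³, (id ⊗ Δ)(R) = R¹³ R¹², and R · Δ(x) = Δ^{op}(x) · R for all x ∈ A. Write R = Σᵢ aᵢ ⊗ bᵢ and define the Drinfeld element U := Σᵢ S(bᵢ) aᵢ ∈ A (i.e. U = m((S ⊗ id)(σ(R))), where σ is the flip and m the multiplication). Then U is invertible and U x U⁻¹ = S²(x) for all x ∈ A. -/

import Mathlib

/- STATEMENT 7: Drinfeld's quantum Casimir theorem: for a quasitriangular structure R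
on a Hopf algebra A, the Drinfeld element U = m((S ⊗ id)(σ(R))) is invertible and
U x U⁻¹ = S²(x) for all x ∈ A. -/

noncomputable section

open TensorProduct

/-- `R¹²` : image of `R ∈ A ⊗ A` in `A ⊗ (A ⊗ A)`, `a ⊗ b ↦ a ⊗ (b ⊗ 1)`. -/
def R12 {k A : Type*} [CommRing k] [Ring A] [Algebra k A] (R : A ⊗[k] A) :
    A ⊗[k] (A ⊗[k] A) :=
  Algebra.TensorProduct.map (AlgHom.id k A)
    (Algebra.TensorProduct.includeLeft : A →ₐ[k] A ⊗[k] A) R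

/-- `R¹³` : image of `R ∈ A ⊗ A` in `A ⊗ (A ⊗ A)`, `a ⊗ b ↦ a ⊗ (1 ⊗ b)`. -/
def R13 {k A : Type*} [CommRing k] [Ring A] [Algebra k A] (R : A ⊗[k] A) :
    A ⊗[k] (A ⊗[k] A) :=
  Algebra.TensorProduct.map (AlgHom.id k A)
    (Algebra.TensorProduct.includeRight : A →ₐ[k] A ⊗[k] A) R

/-- `R²³` : image of `R ∈ A ⊗ A` in `A ⊗ (A ⊗ A)`, `a ⊗ b ↦ 1 ⊗ (a ⊗ b)`. -/
def R23 {k A : Type*} [CommRing k] [Ring A] [Algebra k A] (R : A ⊗[k] A) :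
    A ⊗[k] (A ⊗[k] A) :=
  (Algebra.TensorProduct.includeRight : (A ⊗[k] A) →ₐ[k] A ⊗[k] (A ⊗[k] A)) R

/-- The Drinfeld element `U = m((S ⊗ id)(σ(R)))`, i.e. `U = Σᵢ S(bᵢ) aᵢ` if
`R = Σᵢ aᵢ ⊗ bᵢ`. -/
def drinfeldElement {k A : Type*} [Field k] [Ring A] [HopfAlgebra k A]
    (R : A ⊗[k] A) : A :=
  (LinearMap.mul' k A)
    ((TensorProduct.map (HopfAlgebra.antipode (R := k)) LinearMap.id)
      ((TensorProduct.comm k A A) R))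

section Helpers

open HopfAlgebra

variable {k A : Type*} [Field k] [Ring A] [HopfAlgebra k A]

/-- `ηε`. -/
def etaEps (k A : Type*) [Field k] [Ring A] [HopfAlgebra k A] : A →ₗ[k] A :=
  (Algebra.linearMap k A) ∘ₗ Coalgebra.counit

lemma R13_R23_map (f g : A →ₗ[k] A) (P Q : A ⊗[k] A) :
    TensorProduct.map (LinearMap.mul' k A ∘ₗ TensorProduct.map f g) LinearMap.id
      ((TensorProduct.assoc k A A A).symm (R13 P * R23 Q)) =
    TensorProduct.map f LinearMap.id P * TensorProduct.map g LinearMap.id Q := by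
  induction P with
  | zero => simp [R13]
  | add x y hx hy => simp only [R13, map_add, add_mul] at hx hy ⊢; rw [hx, hy]
  | tmul a b =>
    induction Q with
    | zero => simp [R23]
    | add x y hx hy => simp only [R23, map_add, mul_add] at hx hy ⊢; rw [hx, hy]
    | tmul c d => simp [R13, R23]

lemma R12_R13_map (f g : A →ₗ[k] A) (P Q : A ⊗[k] A) :
    TensorProduct.map LinearMap.id (LinearMap.mul' k A ∘ₗ TensorProduct.map f g)
      (R12 P * R13 Q) =
    TensorProduct.map LinearMap.id f P * TensorProduct.map LinearMap.id g Q := by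
  induction P with
  | zero => simp [R12]
  | add x y hx hy => simp only [R12, map_add, add_mul] at hx hy ⊢; rw [hx, hy]
  | tmul a b =>
    induction Q with
    | zero => simp [R13]
    | add x y hx hy => simp only [R13, map_add, mul_add] at hx hy ⊢; rw [hx, hy]
    | tmul c d => simp [R12, R13]

lemma conv_S : (LinearMap.mul' k A ∘ₗ TensorProduct.map (antipode k) LinearMap.id) ∘ₗ
    Coalgebra.comul = etaEps k A :=
  HopfAlgebra.mul_antipode_rTensor_comul

lemma conv_S' : (LinearMap.mul' k A ∘ₗ TensorProduct.map LinearMap.id (antipode k)) ∘ₗ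
    Coalgebra.comul = etaEps k A :=
  HopfAlgebra.mul_antipode_lTensor_comul

lemma conv_eps : (LinearMap.mul' k A ∘ₗ TensorProduct.map (etaEps k A) LinearMap.id) ∘ₗ
    Coalgebra.comul = LinearMap.id := by
  have := one_mul (WithConv.toConv (LinearMap.id : A →ₗ[k] A))
  exact congrArg WithConv.ofConv this

lemma conv_eps' : (LinearMap.mul' k A ∘ₗ TensorProduct.map LinearMap.id (etaEps k A)) ∘ₗ
    Coalgebra.comul = LinearMap.id := by
  have := mul_one (WithConv.toConv (LinearMap.id : A →ₗ[k] A))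
  exact congrArg WithConv.ofConv this

lemma conv_left (R : A ⊗[k] A)
    (hax1 : (TensorProduct.assoc k A A A).toLinearMap
        ((TensorProduct.map (Coalgebra.comul (R := k)) LinearMap.id) R) = R13 R * R23 R)
    (f : A →ₗ[k] A) :
    TensorProduct.map ((LinearMap.mul' k A ∘ₗ TensorProduct.map f LinearMap.id) ∘ₗ
      Coalgebra.comul) LinearMap.id R = TensorProduct.map f LinearMap.id R * R := by
  have h := R13_R23_map f LinearMap.id R R
  rw [← hax1] at h
  simp only [LinearEquiv.coe_coe, LinearEquiv.symm_apply_apply, TensorProduct.map_id,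
    LinearMap.id_apply] at h
  rw [← h, ← LinearMap.comp_apply, ← TensorProduct.map_comp, LinearMap.id_comp]

lemma conv_right (Q : A ⊗[k] A)
    (hQ : (TensorProduct.map LinearMap.id (Coalgebra.comul (R := k))) Q = R12 Q * R13 Q)
    (f : A →ₗ[k] A) :
    TensorProduct.map LinearMap.id ((LinearMap.mul' k A ∘ₗ TensorProduct.map f LinearMap.id) ∘ₗ
      Coalgebra.comul) Q = TensorProduct.map LinearMap.id f Q * Q := by
  have h := R12_R13_map f LinearMap.id Q Q
  rw [← hQ] at h
  simp only [TensorProduct.map_id, LinearMap.id_apply] at h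
  rw [← h, ← LinearMap.comp_apply (TensorProduct.map _ _), ← TensorProduct.map_comp,
    LinearMap.id_comp]

lemma left_inv_R (R : A ⊗[k] A) (hR : IsUnit R)
    (hax1 : (TensorProduct.assoc k A A A).toLinearMap
        ((TensorProduct.map (Coalgebra.comul (R := k)) LinearMap.id) R) = R13 R * R23 R) :
    TensorProduct.map (antipode k) LinearMap.id R * R = 1 := by
  have h1 := conv_left R hax1 (etaEps k A)
  have h2 := conv_left R hax1 (antipode k)
  rw [conv_eps, TensorProduct.map_id, LinearMap.id_apply] at h1
  rw [conv_S] at h2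
  rw [← h2]
  exact hR.mul_right_cancel (by rw [one_mul]; exact h1.symm)

lemma right_inv_Q (Q : A ⊗[k] A) (hu : IsUnit Q)
    (hQ : (TensorProduct.map LinearMap.id (Coalgebra.comul (R := k))) Q = R12 Q * R13 Q) :
    TensorProduct.map LinearMap.id (antipode k) Q * Q = 1 := by
  have h1 := conv_right Q hQ (etaEps k A)
  have h2 := conv_right Q hQ (antipode k)
  rw [conv_eps, TensorProduct.map_id, LinearMap.id_apply] at h1
  rw [conv_S] at h2
  rw [← h2]
  exact hu.mul_right_cancel (by rw [one_mul]; exact h1.symm)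

lemma R12_mul (P Q : A ⊗[k] A) : R12 (P * Q) = R12 P * R12 Q := map_mul _ _ _
lemma R13_mul (P Q : A ⊗[k] A) : R13 (P * Q) = R13 P * R13 Q := map_mul _ _ _
lemma R12_one : R12 (1 : A ⊗[k] A) = 1 := map_one _
lemma R13_one : R13 (1 : A ⊗[k] A) = 1 := map_one _

lemma comul_inv (R Q : A ⊗[k] A) (h1 : R * Q = 1) (h2 : Q * R = 1)
    (hax2 : (TensorProduct.map LinearMap.id (Coalgebra.comul (R := k))) R = R13 R * R12 R) :
    (TensorProduct.map LinearMap.id (Coalgebra.comul (R := k))) Q = R12 Q * R13 Q := by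
  let D : A ⊗[k] A →ₐ[k] A ⊗[k] (A ⊗[k] A) :=
    Algebra.TensorProduct.map (AlgHom.id k A) (Bialgebra.comulAlgHom k A)
  have hD : ∀ P, TensorProduct.map LinearMap.id (Coalgebra.comul (R := k)) P = D P :=
    fun P => rfl
  rw [hD] at hax2 ⊢
  apply left_inv_eq_right_inv (a := D R)
  · rw [← map_mul, h2, map_one]
  · rw [hax2, mul_assoc, ← mul_assoc (R12 R), ← R12_mul, h1, R12_one, one_mul, ← R13_mul, h1,
      R13_one]

lemma S_S_R (R : A ⊗[k] A) (hR : IsUnit R)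
    (hax1 : (TensorProduct.assoc k A A A).toLinearMap
        ((TensorProduct.map (Coalgebra.comul (R := k)) LinearMap.id) R) = R13 R * R23 R)
    (hax2 : (TensorProduct.map LinearMap.id (Coalgebra.comul (R := k))) R = R13 R * R12 R) :
    R * TensorProduct.map (antipode k) LinearMap.id R = 1 ∧
    TensorProduct.map (antipode k) (antipode k) R = R := by
  have h2 := left_inv_R R hR hax1
  obtain ⟨u, rfl⟩ := hR
  have hi : TensorProduct.map (antipode k) LinearMap.id (u : A ⊗[k] A) = (u⁻¹ : (A ⊗[k] A)ˣ) :=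
    (Units.inv_eq_of_mul_eq_one_left h2).symm
  have h1 : (u : A ⊗[k] A) * TensorProduct.map (antipode k) LinearMap.id (u : A ⊗[k] A) = 1 := by
    rw [hi]; exact u.mul_inv
  refine ⟨h1, ?_⟩
  have h3 := right_inv_Q _ (hi ▸ u⁻¹.isUnit) (comul_inv _ _ h1 h2 hax2)
  rw [← LinearMap.comp_apply, ← TensorProduct.map_comp, LinearMap.id_comp, LinearMap.comp_id] at h3
  exact left_inv_eq_right_inv h3 h2

/-- `p ⊗ q ↦ S(q) w p`. -/
def sand (w : A) : A ⊗[k] A →ₗ[k] A :=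
  TensorProduct.lift ((LinearMap.mul k A).compl₁₂ ((LinearMap.mulRight k w) ∘ₗ antipode k)
    LinearMap.id).flip

@[simp] lemma sand_tmul (w p q : A) : sand (k := k) w (p ⊗ₜ q) = antipode k q * w * p := by
  simp [sand]

lemma drinfeld_eq (R : A ⊗[k] A) : drinfeldElement R = sand 1 R := by
  induction R with
  | zero => simp [drinfeldElement]
  | add x y hx hy => simp only [drinfeldElement, map_add] at hx hy ⊢; rw [hx, hy]
  | tmul a b => simp [drinfeldElement]

lemma sand_mul_right (R t : A ⊗[k] A) : sand 1 (R * t) = sand (sand 1 R) t := by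
  induction t with
  | zero => simp
  | add x y hx hy => rw [mul_add, map_add, map_add, hx, hy]
  | tmul c d =>
    induction R with
    | zero => simp
    | add x y hx hy =>
      rw [add_mul, map_add, map_add, hx, hy]; simp [mul_add, add_mul]
    | tmul a b => simp [antipode_mul_antidistrib, mul_assoc]

lemma sand_mul_left (R t : A ⊗[k] A) :
    sand 1 ((TensorProduct.comm k A A) t * R) =
      sand (LinearMap.mul' k A (TensorProduct.map (antipode k) LinearMap.id t)) R := by
  induction R with
  | zero => simp
  | add x y hx hy => rw [mul_add, map_add, map_add, hx, hy]
  | tmul c d =>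
    induction t with
    | zero => simp
    | add x y hx hy =>
      simp only [map_add, add_mul, hx, hy]; simp [mul_add, add_mul]
    | tmul a b => simp [antipode_mul_antidistrib, mul_assoc]

lemma sand_algebraMap (c : k) (R : A ⊗[k] A) :
    sand (algebraMap k A c) R = algebraMap k A c * sand 1 R := by
  induction R with
  | zero => simp
  | add x y hx hy => rw [map_add, map_add, hx, hy, mul_add]
  | tmul a b =>
    simp only [sand_tmul, mul_one]
    rw [← Algebra.commutes c (antipode k b), mul_assoc]

/-- `x ⊗ y ↦ S²(y) f(x)`. -/
def outer (f : A →ₗ[k] A) : A ⊗[k] A →ₗ[k] A :=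
  TensorProduct.lift ((LinearMap.mul k A).compl₁₂ (antipode k ∘ₗ antipode k) f).flip

@[simp] lemma outer_tmul (f : A →ₗ[k] A) (x y : A) :
    outer f (x ⊗ₜ[k] y) = antipode k (antipode k y) * f x := by
  simp [outer]

lemma outer_eps (w : A) (t : A ⊗[k] A) :
    outer (LinearMap.mulRight k w ∘ₗ etaEps k A) t = antipode k (antipode k
      (LinearMap.mul' k A (TensorProduct.map (etaEps k A) LinearMap.id t))) * w := by
  induction t with
  | zero => simp
  | add x y hx hy => simp only [map_add, hx, hy, add_mul]
  | tmul a b =>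
    simp only [outer_tmul, LinearMap.comp_apply, TensorProduct.map_tmul, LinearMap.mul'_apply,
      etaEps, Algebra.linearMap_apply, LinearMap.id_apply, LinearMap.mulRight_apply]
    rw [← Algebra.smul_def, ← Algebra.smul_def, map_smul, map_smul]
    simp

lemma outer_sand (w : A) (t : (A ⊗[k] A) ⊗[k] A) :
    TensorProduct.lift ((LinearMap.mul k A).compl₁₂ (antipode k ∘ₗ antipode k) (sand w)).flip t =
      sand w (TensorProduct.map LinearMap.id
        (LinearMap.mul' k A ∘ₗ TensorProduct.map LinearMap.id (antipode k))
        ((TensorProduct.assoc k A A A) t)) := by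
  induction t with
  | zero => simp
  | add x y hx hy => simp only [map_add, hx, hy]
  | tmul s y =>
    induction s with
    | zero => simp
    | add x y hx hy => simp only [map_add, hx, hy, TensorProduct.add_tmul]
    | tmul a b => simp [antipode_mul_antidistrib, mul_assoc]

lemma outer_comp (w : A) (t : A ⊗[k] A) :
    outer (sand w ∘ₗ Coalgebra.comul) t =
    TensorProduct.lift ((LinearMap.mul k A).compl₁₂ (antipode k ∘ₗ antipode k) (sand w)).flip
      (Coalgebra.comul.rTensor A t) := by
  induction t with
  | zero => simp
  | add x y hx hy => simp only [map_add, hx, hy]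
  | tmul a b => simp

lemma sand_eps (w : A) (t : A ⊗[k] A) :
    sand w (TensorProduct.map LinearMap.id (etaEps k A) t) =
      w * LinearMap.mul' k A (TensorProduct.map LinearMap.id (etaEps k A) t) := by
  induction t with
  | zero => simp
  | add x y hx hy => simp only [map_add, hx, hy, mul_add]
  | tmul a b =>
    simp only [TensorProduct.map_tmul, sand_tmul, LinearMap.mul'_apply, etaEps,
      LinearMap.comp_apply, Algebra.linearMap_apply, LinearMap.id_apply,
      Algebra.algebraMap_eq_smul_one, map_smul, antipode_one]
    simp

lemma drinfeld_comm (R : A ⊗[k] A)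
    (hax3 : ∀ x : A, R * Coalgebra.comul (R := k) x =
        (TensorProduct.comm k A A).toLinearMap (Coalgebra.comul (R := k) x) * R) (x : A) :
    sand 1 R * x = antipode k (antipode k x) * sand 1 R := by
  have key : (sand (sand 1 R) ∘ₗ Coalgebra.comul : A →ₗ[k] A) =
      LinearMap.mulRight k (sand 1 R) ∘ₗ etaEps k A := by
    ext y
    have h := congrArg (sand (k := k) 1) (hax3 y)
    rw [sand_mul_right, LinearEquiv.coe_coe, sand_mul_left] at h
    have h' := LinearMap.congr_fun (conv_S (k := k) (A := A)) y
    simp only [LinearMap.comp_apply] at h' ⊢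
    rw [h, h']
    simp only [etaEps, LinearMap.comp_apply, Algebra.linearMap_apply, sand_algebraMap,
      LinearMap.mulRight_apply]
  have h := congrArg (fun f => outer f (Coalgebra.comul x)) key
  have e1 := LinearMap.congr_fun (conv_eps (k := k) (A := A)) x
  have e2 := LinearMap.congr_fun (conv_eps' (k := k) (A := A)) x
  simp only [LinearMap.comp_apply, LinearMap.id_apply] at e1 e2
  rw [outer_eps, e1, outer_comp, outer_sand, Coalgebra.coassoc_apply, LinearMap.lTensor,
    ← LinearMap.comp_apply (TensorProduct.map _ _), ← TensorProduct.map_comp, conv_S',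
    LinearMap.id_comp, sand_eps, e2] at h
  exact h

/-- `p ⊗ q ↦ q w p`. -/
def flipSand (w : A) : A ⊗[k] A →ₗ[k] A :=
  TensorProduct.lift ((LinearMap.mul k A).compl₁₂ (LinearMap.mulRight k w) LinearMap.id).flip

@[simp] lemma flipSand_tmul (w p q : A) : flipSand (k := k) w (p ⊗ₜ q) = q * w * p := by
  simp [flipSand]

end Helpers

theorem drinfeld_quantum_casimir
    {k A : Type*} [Field k] [Ring A] [HopfAlgebra k A]
    (R : A ⊗[k] A) (hR : IsUnit R)
    (hax1 : (TensorProduct.assoc k A A A).toLinearMap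
        ((TensorProduct.map (Coalgebra.comul (R := k)) LinearMap.id) R) = R13 R * R23 R)
    (hax2 : (TensorProduct.map LinearMap.id (Coalgebra.comul (R := k))) R = R13 R * R12 R)
    (hax3 : ∀ x : A, R * Coalgebra.comul (R := k) x =
        (TensorProduct.comm k A A).toLinearMap (Coalgebra.comul (R := k) x) * R) :
    ∃ Uinv : A,
      drinfeldElement R * Uinv = 1 ∧ Uinv * drinfeldElement R = 1 ∧
        ∀ x : A, drinfeldElement R * x * Uinv =
          HopfAlgebra.antipode (R := k) (HopfAlgebra.antipode (R := k) x) := by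
  obtain ⟨hinv, hSS⟩ := S_S_R R hR hax1 hax2
  have hc := drinfeld_comm R hax3
  rw [drinfeld_eq]
  set U := sand 1 R with hU
  let S : A →ₗ[k] A := HopfAlgebra.antipode k
  have hSS2 : TensorProduct.map (S ∘ₗ S) (S ∘ₗ S) R = R := by
    rw [TensorProduct.map_comp, LinearMap.comp_apply, hSS, hSS]
  have hS2 : TensorProduct.map (S ∘ₗ S) S R = TensorProduct.map S LinearMap.id R := by
    conv_rhs => rw [← hSS]
    rw [← LinearMap.comp_apply, ← TensorProduct.map_comp]; rfl
  -- `V = Σ b S²(a)`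
  let V := flipSand 1 (TensorProduct.map (S ∘ₗ S) LinearMap.id R)
  have hUV' : ∀ P : A ⊗[k] A, U * flipSand 1 (TensorProduct.map (S ∘ₗ S) LinearMap.id P) =
      flipSand U (TensorProduct.map (S ∘ₗ S) (S ∘ₗ S) P) := by
    intro P
    induction P with
    | zero => simp
    | add x y hx hy => simp only [map_add, mul_add, hx, hy]
    | tmul a b => 
      simp only [TensorProduct.map_tmul, flipSand_tmul, mul_one, LinearMap.id_apply]
      rw [← mul_assoc, hc]; rfl
  have hVU' : ∀ P : A ⊗[k] A, flipSand 1 (TensorProduct.map (S ∘ₗ S) LinearMap.id P) * U =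
      flipSand U P := by
    intro P
    induction P with
    | zero => simp
    | add x y hx hy => simp only [map_add, add_mul, hx, hy]
    | tmul a b => simp [mul_assoc, hc, S]
  have hfs : ∀ P : A ⊗[k] A, flipSand U (TensorProduct.map (S ∘ₗ S) (S ∘ₗ S) P) =
      sand U (TensorProduct.map (S ∘ₗ S) S P) := by
    intro P
    induction P with
    | zero => simp
    | add x y hx hy => simp only [map_add, hx, hy]
    | tmul a b => simp [S]
  have hUV : U * V = 1 := by
    rw [hUV', hfs, hS2, hU, ← sand_mul_right, hinv, Algebra.TensorProduct.one_def]
    simp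
  have hVU : V * U = 1 := by
    rw [hVU', ← hUV, hUV', hSS2]
  exact ⟨V, hUV, hVU, fun x => by rw [hc, mul_assoc, hUV, mul_one]⟩
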